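/- Regard the LSZ partition function Z(J,K) also as a function of the parameter E_p. For every coupling λ ≥ 0, every p ∈ {1,…,N} and all J, K ∈ M_N(ℂ), this dependence is differentiable and the boundary-creation identity ∂Z/∂E_p(J,K) = −(1/N)·Σ_{n=1}^N ∂²Z/∂J_{pn}∂K_{np}(J,K) holds. -/

import Mathlib

/-!
Differentiating the integrand `exp(-N S + N(...))` in `E_p` produces the factor
`-N Σ_n |Φ_{pn}|²`, while differentiating it in `K_{np}` and `J_{pn}` produces `N Φ_{pn}` and
`N conj Φ_{pn}`, whose product is `N² |Φ_{pn}|²`. The identity therefore holds under the integral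
sign, and only differentiation under the integral has to be justified.

All three derivatives have the form `d/dt ∫ f exp(t h)` at `t = 0`, where `f` has Gaussian decay
(`GaussDecay`: continuous and `O(exp(-c |Φ|²))` for some `c > 0`) and `h` grows at most
quadratically. `GaussDecay.hasDerivAt_integral` treats this once: for `|t|` small the factor
`exp(t h)` costs only a fraction of the Gaussian, which leaves an integrable dominating function.
`gaussDecay_lszIntegrand` gives the decay of the integrand: the quartic term has the good sign
because `Tr((Φ*Φ)²) ≥ 0`, and the linear source terms are absorbed by completing the square.
-/

open MeasureTheory Matrix

/-! ### The LSZ model -/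

/-- The LSZ action `S(Φ) = Σ_{m,n} (E_n + Ẽ_m)|Φ_{nm}|² + (λ/2)·Tr((Φ*Φ)²)`,
viewed as a complex number. -/
noncomputable def lszAction (N : ℕ) (E Et : Fin N → ℝ) (lam : ℝ)
    (Φ : Fin N → Fin N → ℂ) : ℂ :=
  (∑ n, ∑ m, (((E n + Et m : ℝ)) : ℂ) * ((Complex.normSq (Φ n m) : ℝ) : ℂ))
    + ((lam / 2 : ℝ) : ℂ) *
      ((((Matrix.of Φ)ᴴ * Matrix.of Φ) * ((Matrix.of Φ)ᴴ * Matrix.of Φ)).trace)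

/-- The integrand of the LSZ partition function with sources `J`, `K`. -/
noncomputable def lszIntegrand (N : ℕ) (E Et : Fin N → ℝ) (lam : ℝ)
    (J K : Fin N → Fin N → ℂ) (Φ : Fin N → Fin N → ℂ) : ℂ :=
  Complex.exp (-(N : ℂ) * lszAction N E Et lam Φ
    + (N : ℂ) * ((∑ m, ∑ n, J n m * (starRingEnd ℂ) (Φ n m))
      + ∑ m, ∑ n, K m n * Φ n m))

/-- The LSZ partition function `Z(J,K)`. -/
noncomputable def lszZ (N : ℕ) (E Et : Fin N → ℝ) (lam : ℝ)
    (J K : Fin N → Fin N → ℂ) : ℂ :=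
  ∫ Φ : Fin N → Fin N → ℂ, lszIntegrand N E Et lam J K Φ

/-- The elementary matrix with a single `1` at position `(a,b)`. -/
def eMat (N : ℕ) (a b : Fin N) : Fin N → Fin N → ℂ :=
  fun i j => if i = a ∧ j = b then 1 else 0

/-- The holomorphic partial derivative `∂/∂J_{ab}` of a function of `(J,K)`. -/
noncomputable def dJ (N : ℕ) (a b : Fin N)
    (f : (Fin N → Fin N → ℂ) → (Fin N → Fin N → ℂ) → ℂ) :
    (Fin N → Fin N → ℂ) → (Fin N → Fin N → ℂ) → ℂ :=
  fun J K => deriv (fun t : ℂ => f (J + t • eMat N a b) K) 0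

/-- The holomorphic partial derivative `∂/∂K_{ab}` of a function of `(J,K)`. -/
noncomputable def dK (N : ℕ) (a b : Fin N)
    (f : (Fin N → Fin N → ℂ) → (Fin N → Fin N → ℂ) → ℂ) :
    (Fin N → Fin N → ℂ) → (Fin N → Fin N → ℂ) → ℂ :=
  fun J K => deriv (fun t : ℂ => f J (K + t • eMat N a b)) 0

/-! ### Gaussian decay and differentiation under the integral -/

/-- The squared Hilbert–Schmidt norm `Σ |Φ_{nm}|²`. -/
noncomputable def hsSq {N : ℕ} (Φ : Fin N → Fin N → ℂ) : ℝ := ∑ n, ∑ m, ‖Φ n m‖ ^ 2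

/-- Continuous functions of `Φ` bounded by a multiple of a centred Gaussian. -/
def GaussDecay {N : ℕ} (f : (Fin N → Fin N → ℂ) → ℂ) : Prop :=
  Continuous f ∧ ∃ C c : ℝ, 0 ≤ C ∧ 0 < c ∧ ∀ Φ, ‖f Φ‖ ≤ C * Real.exp (-c * hsSq Φ)

/-- Continuous functions of `Φ` of at most quadratic growth. -/
def QuadGrowth {N : ℕ} (h : (Fin N → Fin N → ℂ) → ℂ) : Prop :=
  Continuous h ∧ ∃ D : ℝ, 0 < D ∧ ∀ Φ, ‖h Φ‖ ≤ D * (1 + hsSq Φ)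

section

variable {N : ℕ}

lemma hsSq_nonneg (Φ : Fin N → Fin N → ℂ) : 0 ≤ hsSq Φ := by
  unfold hsSq; positivity

lemma normSq_le_hsSq (Φ : Fin N → Fin N → ℂ) (n m : Fin N) : ‖Φ n m‖ ^ 2 ≤ hsSq Φ := by
  unfold hsSq
  calc ‖Φ n m‖ ^ 2 ≤ ∑ m, ‖Φ n m‖ ^ 2 :=
        Finset.single_le_sum (f := fun m => ‖Φ n m‖ ^ 2) (fun _ _ => by positivity)
          (Finset.mem_univ m)
    _ ≤ _ := Finset.single_le_sum (f := fun n => ∑ m, ‖Φ n m‖ ^ 2)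
          (fun _ _ => by positivity) (Finset.mem_univ n)

lemma norm_entry_le (Φ : Fin N → Fin N → ℂ) (n m : Fin N) : ‖Φ n m‖ ≤ 1 + hsSq Φ := by
  nlinarith [normSq_le_hsSq Φ n m, sq_nonneg (‖Φ n m‖ - 1)]

lemma integrable_gauss {c : ℝ} (hc : 0 < c) :
    Integrable (fun Φ : Fin N → Fin N → ℂ => Real.exp (-c * hsSq Φ)) := by
  have h1 : Integrable (fun z : ℂ => Real.exp (-c * ‖z‖ ^ 2)) := by
    have := (GaussianFourier.integrable_cexp_neg_mul_sq_norm_add (V := ℂ) (b := (c : ℂ))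
      (by simpa using hc) 0 0).norm
    refine this.congr (Filter.Eventually.of_forall fun z => ?_)
    simp only [Complex.norm_exp]
    congr 1
    simp [← Complex.ofReal_pow]
  have h2 : Integrable (fun x : Fin N → ℂ => ∏ m, Real.exp (-c * ‖x m‖ ^ 2)) :=
    Integrable.fintype_prod (f := fun (_ : Fin N) (z : ℂ) => Real.exp (-c * ‖z‖ ^ 2)) fun _ => h1
  have h3 : Integrable (fun Φ : Fin N → Fin N → ℂ => ∏ n, ∏ m, Real.exp (-c * ‖Φ n m‖ ^ 2)) :=
    Integrable.fintype_prod
      (f := fun (_ : Fin N) (x : Fin N → ℂ) => ∏ m, Real.exp (-c * ‖x m‖ ^ 2)) fun _ => h2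
  refine h3.congr (Filter.Eventually.of_forall fun Φ => ?_)
  simp only [← Real.exp_sum, hsSq, Finset.mul_sum]

lemma GaussDecay.integrable {f : (Fin N → Fin N → ℂ) → ℂ} (hf : GaussDecay f) :
    Integrable f := by
  obtain ⟨hcont, C, c, -, hc, hb⟩ := hf
  exact ((integrable_gauss hc).const_mul C).mono' hcont.aestronglyMeasurable
    (Filter.Eventually.of_forall hb)

lemma one_add_le_exp {c q : ℝ} (hc : 0 < c) (hq : 0 ≤ q) :
    1 + q ≤ (1 + 1 / c) * Real.exp (c * q) := by
  have h1 := Real.add_one_le_exp (c * q)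
  have h2 : (1 + 1 / c) * (c * q + 1) = 1 + q + c * q + 1 / c := by field_simp; ring
  have : (1 + 1 / c) * (c * q + 1) ≤ (1 + 1 / c) * Real.exp (c * q) := by gcongr
  have : 0 ≤ c * q := by positivity
  have : 0 < 1 / c := by positivity
  linarith

/-- Gaussian decay survives multiplication by a function of quadratic growth, at the price of a
smaller rate. -/
lemma GaussDecay.mul {f h : (Fin N → Fin N → ℂ) → ℂ} (hf : GaussDecay f) (hh : QuadGrowth h) :
    GaussDecay (fun Φ => h Φ * f Φ) := by
  obtain ⟨hcont, C, c, hC, hc, hb⟩ := hf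
  obtain ⟨hhc, D, hD, hhb⟩ := hh
  refine ⟨hhc.mul hcont, D * (1 + 1 / (c / 2)) * C, c / 2, by positivity, by positivity,
    fun Φ => ?_⟩
  rw [norm_mul]
  have h1 := one_add_le_exp (half_pos hc) (hsSq_nonneg Φ)
  calc ‖h Φ‖ * ‖f Φ‖
      ≤ (D * ((1 + 1 / (c / 2)) * Real.exp (c / 2 * hsSq Φ))) * (C * Real.exp (-c * hsSq Φ)) := by
        gcongr
        · exact (hhb Φ).trans (by gcongr)
        · exact hb Φ
    _ = D * (1 + 1 / (c / 2)) * C * (Real.exp (c / 2 * hsSq Φ) * Real.exp (-c * hsSq Φ)) := by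
        ring
    _ = _ := by rw [← Real.exp_add]; congr 2; ring

/-- Differentiation under the integral sign for exponential perturbations of a Gaussian-decaying
function. -/
lemma GaussDecay.hasDerivAt_integral {f h : (Fin N → Fin N → ℂ) → ℂ} (hf : GaussDecay f)
    (hh : QuadGrowth h) :
    HasDerivAt (fun t : ℂ => ∫ Φ, f Φ * Complex.exp (t * h Φ)) (∫ Φ, h Φ * f Φ) 0 := by
  have hg := hf.mul hh
  obtain ⟨hgc, C, c, hC, hc, hb⟩ := hg
  obtain ⟨hhc, D, hD, hhb⟩ := hh
  have hfc := hf.1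
  -- This radius makes `|t h| ≤ (c / 2) (1 + hsSq Φ)`, half of the Gaussian rate of `h f`.
  have hr : 0 < c / (2 * D) := by positivity
  have key := hasDerivAt_integral_of_dominated_loc_of_deriv_le (μ := volume) (x₀ := (0 : ℂ))
    (F := fun t Φ => f Φ * Complex.exp (t * h Φ))
    (F' := fun t Φ => h Φ * f Φ * Complex.exp (t * h Φ))
    (bound := fun Φ => C * Real.exp (c / 2) * Real.exp (-(c / 2) * hsSq Φ))
    (Metric.ball_mem_nhds 0 hr)
    (Filter.Eventually.of_forall fun t => Continuous.aestronglyMeasurable (by fun_prop))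
    (by simpa using hf.integrable)
    (Continuous.aestronglyMeasurable (by fun_prop))
    (Filter.Eventually.of_forall fun Φ t ht => ?_)
    ((integrable_gauss (half_pos hc)).const_mul _)
    (Filter.Eventually.of_forall fun Φ t ht => ?_)
  · simpa using key.2
  · rw [norm_mul, Complex.norm_exp]
    have ht' : ‖t‖ ≤ c / (2 * D) := by simpa using (Metric.mem_ball.1 ht).le
    have h1 : (t * h Φ).re ≤ c / 2 * (1 + hsSq Φ) := by
      calc (t * h Φ).re ≤ ‖t * h Φ‖ := Complex.re_le_norm _
        _ = ‖t‖ * ‖h Φ‖ := norm_mul _ _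
        _ ≤ c / (2 * D) * (D * (1 + hsSq Φ)) := by gcongr; exact hhb Φ
        _ = _ := by field_simp
    calc ‖h Φ * f Φ‖ * Real.exp (t * h Φ).re
        ≤ C * Real.exp (-c * hsSq Φ) * Real.exp (c / 2 * (1 + hsSq Φ)) := by
          gcongr; exact hb Φ
      _ = C * (Real.exp (-c * hsSq Φ) * Real.exp (c / 2 * (1 + hsSq Φ))) := by ring
      _ = C * (Real.exp (c / 2) * Real.exp (-(c / 2) * hsSq Φ)) := by
          rw [← Real.exp_add, ← Real.exp_add]; congr 2; ring
      _ = _ := by ring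
  · have h1 : HasDerivAt (fun t : ℂ => t * h Φ) (h Φ) t := by
      simpa using (hasDerivAt_id t).mul_const (h Φ)
    exact (h1.cexp.const_mul (f Φ)).congr_deriv (by ring)

/-! ### Decay of the LSZ integrand -/

open scoped ComplexOrder in
lemma trace_quartic_nonneg (Φ : Fin N → Fin N → ℂ) :
    0 ≤ ((((Matrix.of Φ)ᴴ * Matrix.of Φ) * ((Matrix.of Φ)ᴴ * Matrix.of Φ)).trace).re := by
  have h := (Matrix.posSemidef_conjTranspose_mul_self ((Matrix.of Φ)ᴴ * Matrix.of Φ)).trace_nonneg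
  rw [Matrix.conjTranspose_mul, Matrix.conjTranspose_conjTranspose] at h
  exact (Complex.le_def.1 h).1

lemma continuous_lszIntegrand (E Et : Fin N → ℝ) (lam : ℝ) (J K : Fin N → Fin N → ℂ) :
    Continuous (lszIntegrand N E Et lam J K) := by
  have hof : Continuous (fun Φ : Fin N → Fin N → ℂ => Matrix.of Φ) := continuous_id
  have hn : Continuous (fun z : ℂ => ((Complex.normSq z : ℝ) : ℂ)) :=
    Complex.continuous_ofReal.comp Complex.continuous_normSq
  have htr : Continuous (fun Φ : Fin N → Fin N → ℂ =>
      (((Matrix.of Φ)ᴴ * Matrix.of Φ) * ((Matrix.of Φ)ᴴ * Matrix.of Φ)).trace) :=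
    Continuous.matrix_trace (((hof.matrix_conjTranspose).matrix_mul hof).matrix_mul
      ((hof.matrix_conjTranspose).matrix_mul hof))
  have hns : ∀ n m : Fin N, Continuous (fun Φ : Fin N → Fin N → ℂ =>
      ((Complex.normSq (Φ n m) : ℝ) : ℂ)) := fun n m =>
    hn.comp (by fun_prop : Continuous fun Φ : Fin N → Fin N → ℂ => Φ n m)
  have hcj : ∀ n m : Fin N, Continuous (fun Φ : Fin N → Fin N → ℂ =>
      (starRingEnd ℂ) (Φ n m)) := fun n m =>
    Complex.continuous_conj.comp (by fun_prop : Continuous fun Φ : Fin N → Fin N → ℂ => Φ n m)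
  unfold lszIntegrand lszAction
  fun_prop

lemma gaussDecay_lszIntegrand (hN : 1 ≤ N) {E Et : Fin N → ℝ}
    (hE : ∀ n, 0 < E n) (hEt : ∀ n, 0 < Et n) {lam : ℝ} (hlam : 0 ≤ lam)
    (J K : Fin N → Fin N → ℂ) : GaussDecay (lszIntegrand N E Et lam J K) := by
  have : Nonempty (Fin N) := ⟨⟨0, hN⟩⟩
  obtain ⟨n₀, hn₀⟩ := Finite.exists_min E
  set c := E n₀ with hcdef
  have hc : 0 < c := hE n₀
  have hNpos : (0 : ℝ) < N := by exact_mod_cast hN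
  set B : ℝ := ∑ n, ∑ m, (‖J n m‖ + ‖K m n‖) ^ 2 / (2 * c) with hB
  refine ⟨continuous_lszIntegrand E Et lam J K, Real.exp (N * B), N * (c / 2), by positivity,
    by positivity, fun Φ => ?_⟩
  have hS : c * hsSq Φ ≤ (lszAction N E Et lam Φ).re := by
    have h1 : c * hsSq Φ ≤ ∑ n, ∑ m, (E n + Et m) * Complex.normSq (Φ n m) := by
      simp only [hsSq, Finset.mul_sum, Complex.normSq_eq_norm_sq]
      gcongr with n _ m _
      linarith [hn₀ n, hEt m]
    have h2 : 0 ≤ lam / 2 *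
        ((((Matrix.of Φ)ᴴ * Matrix.of Φ) * ((Matrix.of Φ)ᴴ * Matrix.of Φ)).trace).re :=
      mul_nonneg (by positivity) (trace_quartic_nonneg Φ)
    unfold lszAction
    rw [Complex.add_re, Complex.re_ofReal_mul]
    simp only [Complex.re_sum, ← Complex.ofReal_mul, Complex.ofReal_re]
    linarith
  have hL : ((∑ m, ∑ n, J n m * (starRingEnd ℂ) (Φ n m)) + ∑ m, ∑ n, K m n * Φ n m).re
      ≤ B + c / 2 * hsSq Φ := by
    rw [Finset.sum_comm (f := fun m n => J n m * (starRingEnd ℂ) (Φ n m)),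
      Finset.sum_comm (f := fun m n => K m n * Φ n m), hB, hsSq]
    simp only [Finset.mul_sum, ← Finset.sum_add_distrib, Complex.re_sum]
    gcongr with n _ m _
    calc (J n m * (starRingEnd ℂ) (Φ n m) + K m n * Φ n m).re
        ≤ ‖J n m * (starRingEnd ℂ) (Φ n m) + K m n * Φ n m‖ := Complex.re_le_norm _
      _ ≤ ‖J n m * (starRingEnd ℂ) (Φ n m)‖ + ‖K m n * Φ n m‖ := norm_add_le _ _
      _ = (‖J n m‖ + ‖K m n‖) * ‖Φ n m‖ := by
          rw [norm_mul, norm_mul, RCLike.norm_conj]; ring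
      _ ≤ _ := by
          rw [← sub_nonneg]
          have : (‖J n m‖ + ‖K m n‖) ^ 2 / (2 * c) + c / 2 * ‖Φ n m‖ ^ 2
              - (‖J n m‖ + ‖K m n‖) * ‖Φ n m‖
              = ((‖J n m‖ + ‖K m n‖) - c * ‖Φ n m‖) ^ 2 / (2 * c) := by
            field_simp; ring
          rw [this]; positivity
  unfold lszIntegrand
  rw [Complex.norm_exp, ← Real.exp_add, ← Complex.ofReal_natCast, ← Complex.ofReal_neg,
    Complex.add_re, Complex.re_ofReal_mul, Complex.re_ofReal_mul]
  refine Real.exp_le_exp.2 ?_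
  nlinarith [mul_le_mul_of_nonneg_left hS hNpos.le, mul_le_mul_of_nonneg_left hL hNpos.le]

/-! ### Growth of the factors produced by differentiation -/

lemma quadGrowth_entry (n m : Fin N) : QuadGrowth (fun Φ => (N : ℂ) * Φ n m) := by
  refine ⟨by fun_prop, N + 1, by positivity, fun Φ => ?_⟩
  rw [norm_mul, Complex.norm_natCast]
  have := hsSq_nonneg Φ
  gcongr
  · linarith
  · exact norm_entry_le Φ n m

lemma quadGrowth_conj_entry (n m : Fin N) :
    QuadGrowth (fun Φ => (N : ℂ) * (starRingEnd ℂ) (Φ n m)) := by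
  refine ⟨continuous_const.mul (Complex.continuous_conj.comp
    (by fun_prop : Continuous fun Φ : Fin N → Fin N → ℂ => Φ n m)), N + 1, by positivity,
    fun Φ => ?_⟩
  rw [norm_mul, Complex.norm_natCast, RCLike.norm_conj]
  have := hsSq_nonneg Φ
  gcongr
  · linarith
  · exact norm_entry_le Φ n m

lemma quadGrowth_row (p : Fin N) :
    QuadGrowth (fun Φ => -(N : ℂ) * ∑ m, ((Complex.normSq (Φ p m) : ℝ) : ℂ)) := by
  refine ⟨?_, N + 1, by positivity, fun Φ => ?_⟩
  · refine continuous_const.mul (continuous_finsetSum _ fun m _ => ?_)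
    exact (Complex.continuous_ofReal.comp Complex.continuous_normSq).comp
      (by fun_prop : Continuous fun Φ : Fin N → Fin N → ℂ => Φ p m)
  · rw [norm_mul, norm_neg, Complex.norm_natCast, ← Complex.ofReal_sum, Complex.norm_real,
      Real.norm_of_nonneg (Finset.sum_nonneg fun _ _ => Complex.normSq_nonneg _)]
    have h0 := hsSq_nonneg Φ
    have : ∑ m, Complex.normSq (Φ p m) ≤ hsSq Φ := by
      simp only [Complex.normSq_eq_norm_sq, hsSq]
      exact Finset.single_le_sum (f := fun n => ∑ m, ‖Φ n m‖ ^ 2)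
          (fun _ _ => by positivity) (Finset.mem_univ p)
    exact mul_le_mul (by linarith) (by linarith)
      (Finset.sum_nonneg fun _ _ => Complex.normSq_nonneg _) (by positivity)

/-! ### Dependence of the integrand on sources and external field -/

lemma sum_eMat_mul (a b : Fin N) (x : Fin N → Fin N → ℂ) :
    ∑ i, ∑ j, eMat N a b i j * x i j = x a b := by
  rw [Finset.sum_eq_single a, Finset.sum_eq_single b]
  · simp [eMat]
  · intro j _ hj; simp [eMat, hj]
  · simp
  · intro i _ hi; simp [eMat, hi]
  · simp

lemma lszIntegrand_J (E Et : Fin N → ℝ) (lam : ℝ) (J K Φ : Fin N → Fin N → ℂ) (a b : Fin N)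
    (t : ℂ) : lszIntegrand N E Et lam (J + t • eMat N a b) K Φ
      = lszIntegrand N E Et lam J K Φ
        * Complex.exp (t * ((N : ℂ) * (starRingEnd ℂ) (Φ a b))) := by
  have h : ∑ m, ∑ n, (J + t • eMat N a b) n m * (starRingEnd ℂ) (Φ n m)
      = (∑ m, ∑ n, J n m * (starRingEnd ℂ) (Φ n m)) + t * (starRingEnd ℂ) (Φ a b) := by
    rw [← sum_eMat_mul a b fun i j => (starRingEnd ℂ) (Φ i j),
      Finset.sum_comm (f := fun i j => eMat N a b i j * (starRingEnd ℂ) (Φ i j))]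
    simp only [Finset.mul_sum, ← Finset.sum_add_distrib, Pi.add_apply, Pi.smul_apply, smul_eq_mul,
      add_mul, mul_assoc]
  unfold lszIntegrand
  rw [h, ← Complex.exp_add]
  congr 1
  ring

lemma lszIntegrand_K (E Et : Fin N → ℝ) (lam : ℝ) (J K Φ : Fin N → Fin N → ℂ) (a b : Fin N)
    (t : ℂ) : lszIntegrand N E Et lam J (K + t • eMat N a b) Φ
      = lszIntegrand N E Et lam J K Φ * Complex.exp (t * ((N : ℂ) * Φ b a)) := by
  have h : ∑ m, ∑ n, (K + t • eMat N a b) m n * Φ n m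
      = (∑ m, ∑ n, K m n * Φ n m) + t * Φ b a := by
    rw [← sum_eMat_mul a b fun i j => Φ j i]
    simp only [Finset.mul_sum, ← Finset.sum_add_distrib, Pi.add_apply, Pi.smul_apply, smul_eq_mul,
      add_mul, mul_assoc]
  unfold lszIntegrand
  rw [h, ← Complex.exp_add]
  congr 1
  ring

lemma lszIntegrand_E (E Et : Fin N → ℝ) (lam : ℝ) (J K Φ : Fin N → Fin N → ℂ) (p : Fin N)
    (s : ℝ) : lszIntegrand N (Function.update E p s) Et lam J K Φ
      = lszIntegrand N E Et lam J K Φ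
        * Complex.exp (((s - E p : ℝ) : ℂ)
          * (-(N : ℂ) * ∑ m, ((Complex.normSq (Φ p m) : ℝ) : ℂ))) := by
  have h : ∑ n, ∑ m, (((Function.update E p s n + Et m : ℝ)) : ℂ)
        * ((Complex.normSq (Φ n m) : ℝ) : ℂ)
      = (∑ n, ∑ m, (((E n + Et m : ℝ)) : ℂ) * ((Complex.normSq (Φ n m) : ℝ) : ℂ))
        + ((s - E p : ℝ) : ℂ) * ∑ m, ((Complex.normSq (Φ p m) : ℝ) : ℂ) := by
    rw [← sub_eq_iff_eq_add', ← Finset.sum_sub_distrib, Finset.sum_eq_single p]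
    · rw [← Finset.sum_sub_distrib, Finset.mul_sum]
      refine Finset.sum_congr rfl fun m _ => ?_
      simp only [Function.update_self]
      push_cast
      ring
    · intro n _ hn
      simp [Function.update_of_ne hn]
    · simp
  unfold lszIntegrand lszAction
  rw [h, ← Complex.exp_add]
  congr 1
  ring

lemma dJ_dK_lszZ (hN : 1 ≤ N) {E Et : Fin N → ℝ}
    (hE : ∀ n, 0 < E n) (hEt : ∀ n, 0 < Et n) {lam : ℝ} (hlam : 0 ≤ lam)
    (J K : Fin N → Fin N → ℂ) (p n : Fin N) :
    dJ N p n (dK N n p (lszZ N E Et lam)) J K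
      = ∫ Φ, (N : ℂ) * (starRingEnd ℂ) (Φ p n)
          * ((N : ℂ) * Φ p n * lszIntegrand N E Et lam J K Φ) := by
  have h1 : ∀ J' K', dK N n p (lszZ N E Et lam) J' K'
      = ∫ Φ, (N : ℂ) * Φ p n * lszIntegrand N E Et lam J' K' Φ := by
    intro J' K'
    unfold dK lszZ
    simp only [lszIntegrand_K]
    exact ((gaussDecay_lszIntegrand hN hE hEt hlam J' K').hasDerivAt_integral
      (quadGrowth_entry p n)).deriv
  unfold dJ
  simp only [h1, lszIntegrand_J]
  simp only [← mul_assoc ((N : ℂ) * _) (lszIntegrand _ _ _ _ _ _ _) (Complex.exp _)]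
  exact (((gaussDecay_lszIntegrand hN hE hEt hlam J K).mul
    (quadGrowth_entry p n)).hasDerivAt_integral (quadGrowth_conj_entry p n)).deriv

end

/-- Boundary creation identity: regarding `Z(J,K)` as a function of the
parameter `E_p`, this dependence is differentiable and
`∂Z/∂E_p = −(1/N)·Σ_n ∂²Z/∂J_{pn}∂K_{np}`. -/
theorem lsz_boundary_creation
    (N : ℕ) (hN : 1 ≤ N) (E Et : Fin N → ℝ)
    (hE : ∀ n, 0 < E n) (hEt : ∀ n, 0 < Et n) (lam : ℝ) (hlam : 0 ≤ lam)
    (p : Fin N) (J K : Fin N → Fin N → ℂ) :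
    HasDerivAt (fun s : ℝ => lszZ N (Function.update E p s) Et lam J K)
      (-(1 / (N : ℂ)) * ∑ n, dJ N p n (dK N n p (lszZ N E Et lam)) J K) (E p) := by
  have hN0 : (N : ℂ) ≠ 0 := by exact_mod_cast (by omega : N ≠ 0)
  have hdec := gaussDecay_lszIntegrand hN hE hEt hlam J K
  have hval : -(1 / (N : ℂ)) * ∑ n, dJ N p n (dK N n p (lszZ N E Et lam)) J K
      = ∫ Φ, (-(N : ℂ) * ∑ m, ((Complex.normSq (Φ p m) : ℝ) : ℂ))
          * lszIntegrand N E Et lam J K Φ := by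
    simp only [dJ_dK_lszZ hN hE hEt hlam]
    rw [← integral_finsetSum _ fun n _ =>
      ((hdec.mul (quadGrowth_entry p n)).mul (quadGrowth_conj_entry p n)).integrable,
      ← integral_const_mul]
    congr 1
    funext Φ
    simp only [Complex.normSq_eq_conj_mul_self, Finset.mul_sum, Finset.sum_mul]
    refine Finset.sum_congr rfl fun m _ => ?_
    field_simp
  rw [hval]
  unfold lszZ
  simp only [lszIntegrand_E]
  have hd := hdec.hasDerivAt_integral (quadGrowth_row p)
  have hs : HasDerivAt (fun s : ℝ => ((s - E p : ℝ) : ℂ)) 1 (E p) := by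
    simpa using ((hasDerivAt_id (E p)).sub_const (E p)).ofReal_comp
  have hd' : HasDerivAt (fun t : ℂ => ∫ Φ, lszIntegrand N E Et lam J K Φ
      * Complex.exp (t * (-(N : ℂ) * ∑ m, ((Complex.normSq (Φ p m) : ℝ) : ℂ))))
      (∫ Φ, (-(N : ℂ) * ∑ m, ((Complex.normSq (Φ p m) : ℝ) : ℂ))
          * lszIntegrand N E Et lam J K Φ) ((E p - E p : ℝ) : ℂ) := by
    simpa only [sub_self, Complex.ofReal_zero] using hd
  simpa [Function.comp_def] using HasDerivAt.comp (E p) hd' hs
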